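/- Let A and B be n×n real symmetric positive semidefinite matrices and r an integer with 1 ≤ r ≤ n such that every r×r principal submatrix of B is positive definite, and set L := ‖B‖₂ (the operator 2-norm, which is positive). Let x⁰ ∈ dom(G), let 0 < α̲ ≤ ᾱ < 1/L, and let (x^k) be a sequence such that for every k ∈ ℕ there exists α_k ∈ [α̲, ᾱ] with x^{k+1} a minimizer over C of z ↦ ‖z − (x^k − α_k·Bx^k + α_k·G(x^k)·Ax^k)‖₂. Then there exist x⋆ ∈ dom(G), ρ > 0 and τ ∈ (0,1) such that ‖x^k − x⋆‖₂ ≤ ρ·τ^k for all k ∈ ℕ (R-linear convergence), and x⋆ is a critical point of G: with Λ := supp(x⋆), either |Λ| < r and Bx⋆ = G(x⋆)·Ax⋆, or |Λ| = r and B_Λ·x⋆_Λ = G(x⋆)·A_Λ·x⋆_Λ. -/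

import Mathlib

open Filter Topology
open scoped RealInnerProductSpace

noncomputable section

/-- The Fréchet subdifferential of an extended-real-valued function `φ` at `x`:
the set of `y` with `liminf_{z→x, z≠x} (φ z − φ x − ⟨y, z−x⟩)/‖z−x‖ ≥ 0`,
empty when `φ x = +∞`. -/
def fsub {n : ℕ} (φ : EuclideanSpace ℝ (Fin n) → EReal) (x : EuclideanSpace ℝ (Fin n)) :
    Set (EuclideanSpace ℝ (Fin n)) :=
  {y | φ x ≠ ⊤ ∧
    0 ≤ liminf (fun z => (φ z - φ x - ((⟪y, z - x⟫ : ℝ) : EReal)) / ((‖z - x‖ : ℝ) : EReal))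
      (𝓝[≠] x)}

/-- The limiting (Mordukhovich) subdifferential. -/
def lsub {n : ℕ} (φ : EuclideanSpace ℝ (Fin n) → EReal) (x : EuclideanSpace ℝ (Fin n)) :
    Set (EuclideanSpace ℝ (Fin n)) :=
  {y | ∃ u : ℕ → EuclideanSpace ℝ (Fin n), ∃ v : ℕ → EuclideanSpace ℝ (Fin n),
      Tendsto u atTop (𝓝 x) ∧ Tendsto (fun k => φ (u k)) atTop (𝓝 (φ x)) ∧
      (∀ k, v k ∈ fsub φ (u k)) ∧ Tendsto v atTop (𝓝 y)}

/-- The subdifferential of a convex real-valued function. -/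
def csub {n : ℕ} (g : EuclideanSpace ℝ (Fin n) → ℝ) (x : EuclideanSpace ℝ (Fin n)) :
    Set (EuclideanSpace ℝ (Fin n)) :=
  {y | ∀ z, g x + ⟪y, z - x⟫ ≤ g z}

/-- The (possibly set-valued) proximity operator of a proper lsc extended-real-valued
function `ψ` at `u`. -/
def proxSet {n : ℕ} (ψ : EuclideanSpace ℝ (Fin n) → EReal) (u : EuclideanSpace ℝ (Fin n)) :
    Set (EuclideanSpace ℝ (Fin n)) :=
  {y | ∀ z, ψ y + ((‖y - u‖ ^ 2 / 2 : ℝ) : EReal) ≤ ψ z + ((‖z - u‖ ^ 2 / 2 : ℝ) : EReal)}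

/-- The fractional objective `F = (f+h)/g` on `Ω ∩ dom f`, `+∞` elsewhere. -/
def Ffrac {n : ℕ} (f : EuclideanSpace ℝ (Fin n) → EReal) (g h : EuclideanSpace ℝ (Fin n) → ℝ) :
    EuclideanSpace ℝ (Fin n) → EReal :=
  fun x => if g x ≠ 0 ∧ f x ≠ ⊤ then ((((f x).toReal + h x) / g x : ℝ) : EReal) else ⊤

/-- The support of a vector, as a finset. -/
def suppF {n : ℕ} (x : EuclideanSpace ℝ (Fin n)) : Finset (Fin n) :=
  Finset.univ.filter (fun i => x i ≠ 0)

/-- The sparse unit sphere C = {x : ℝⁿ | ‖x‖₀ ≤ r, ‖x‖₂ = 1}. -/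
def sphC (n r : ℕ) : Set (EuclideanSpace ℝ (Fin n)) :=
  {x | (suppF x).card ≤ r ∧ ‖x‖ = 1}

open Classical in
/-- The indicator function of C, with values in EReal. -/
def indC (n r : ℕ) : EuclideanSpace ℝ (Fin n) → EReal :=
  fun x => if x ∈ sphC n r then 0 else ⊤

/-- Matrix-vector product, as a map on Euclidean space. -/
def mvec {n : ℕ} (M : Matrix (Fin n) (Fin n) ℝ) (x : EuclideanSpace ℝ (Fin n)) :
    EuclideanSpace ℝ (Fin n) :=
  (EuclideanSpace.equiv (Fin n) ℝ).symm (M.mulVec (EuclideanSpace.equiv (Fin n) ℝ x))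

/-- The quadratic form xᵀMx. -/
def qf {n : ℕ} (M : Matrix (Fin n) (Fin n) ℝ) (x : EuclideanSpace ℝ (Fin n)) : ℝ :=
  ∑ i, ∑ j, x i * M i j * x j

open Classical in
/-- The objective G of the sparse generalized eigenvalue problem (formulation (6.4)). -/
def Gfun {n : ℕ} (r : ℕ) (A B : Matrix (Fin n) (Fin n) ℝ) :
    EuclideanSpace ℝ (Fin n) → EReal :=
  fun x => if x ∈ sphC n r ∧ qf A x ≠ 0 then ((qf B x / qf A x : ℝ) : EReal) else ⊤

/-!
The feasible set is the unit sphere of a finite union of coordinate subspaces `V i`. Let `a`, `b` be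
the operators of `A`, `B` and `θ k` the Rayleigh quotient of the `k`-th iterate.

Comparing the projected point with the previous iterate gives sufficient decrease:
`‖x (k + 1) - x k‖ ^ 2` is at most a constant times `θ k - θ (k + 1)`. Hence `θ k` decreases to some
limit `θ`, and the denominators stay bounded away from `0`.

The linear rate comes from the symmetry of `b - θ a`: on each `V i` its quadratic form is at most a
constant times the squared norm of its projection onto `V i`. At an iterate lying in `V i` the form
is `θ (k + 1) - θ` up to a bounded factor, while optimality of the projection step bounds the
projected vector by `‖x (k + 1) - x k‖` and `θ k - θ`. So the gap `e k = θ k - θ` satisfies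
`e (k + 1) ≤ K (e k - e (k + 1) + e k ^ 2)`, which makes it decay geometrically, and with it the
increments. Passing to the limit in the optimality condition shows that the residual at the limit
point is orthogonal to every `V i` containing it, which is criticality.
-/

section GeometricRates

theorem exists_le_mul_pow_of_eventually_le_mul {e : ℕ → ℝ} {q : ℝ} (hq : 0 < q)
    (h : ∀ᶠ k in atTop, e (k + 1) ≤ q * e k) : ∃ C > 0, ∀ k, e k ≤ C * q ^ k := by
  obtain ⟨N, hN⟩ := eventually_atTop.1 h
  have div_pow_le : ∀ k ≥ N, e k / q ^ k ≤ e N / q ^ N := fun k hk => by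
    induction k, hk using Nat.le_induction with
    | base => rfl
    | succ k hk ih =>
      calc e (k + 1) / q ^ (k + 1) ≤ q * e k / q ^ (k + 1) := by gcongr; exact hN k hk
        _ = e k / q ^ k := by rw [pow_succ', mul_div_mul_left _ _ hq.ne']
        _ ≤ e N / q ^ N := ih
  obtain ⟨M, hM⟩ := (isBoundedUnder_of_eventually_le
    (eventually_atTop.2 ⟨N, div_pow_le⟩)).bddAbove_range
  refine ⟨max M 1, by positivity, fun k => ?_⟩
  rw [← div_le_iff₀ (by positivity)]
  exact (hM (Set.mem_range_self k)).trans (le_max_left M 1)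

theorem exists_le_geometric_of_le_mul_sub_add_sq {e : ℕ → ℝ} {K : ℝ} (hK : 0 ≤ K)
    (he : ∀ k, 0 ≤ e k) (hlim : Tendsto e atTop (𝓝 0))
    (hrec : ∀ k, e (k + 1) ≤ K * (e k - e (k + 1) + e k ^ 2)) :
    ∃ C > 0, ∃ q ∈ Set.Ioo (0 : ℝ) 1, ∀ k, e k ≤ C * q ^ k := by
  have quadratic_term_small : ∀ᶠ k in atTop, K * e k < 1 / 2 :=
    (hlim.const_mul K).eventually_lt_const (by norm_num)
  have contraction : ∀ᶠ k in atTop, e (k + 1) ≤ (K + 1 / 2) / (K + 1) * e k := by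
    filter_upwards [quadratic_term_small] with k hk
    rw [div_mul_eq_mul_div, le_div_iff₀ (by positivity)]
    nlinarith [hrec k, he k]
  obtain ⟨C, hC, hCe⟩ := exists_le_mul_pow_of_eventually_le_mul (by positivity) contraction
  refine ⟨C, hC, _, ⟨by positivity, ?_⟩, hCe⟩
  rw [div_lt_one (by positivity)]
  linarith

theorem exists_dist_le_geometric_of_sq_dist_le {X : Type*} [PseudoMetricSpace X] {s : Set X}
    (hs : IsComplete s) {x : ℕ → X} (hx : ∀ k, x k ∈ s) {C q : ℝ} (hq : q ∈ Set.Ioo (0 : ℝ) 1)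
    (h : ∀ k, dist (x k) (x (k + 1)) ^ 2 ≤ C * q ^ k) :
    ∃ y ∈ s, ∃ ρ > 0, ∃ τ ∈ Set.Ioo (0 : ℝ) 1, ∀ k, dist (x k) y ≤ ρ * τ ^ k := by
  have hτ : √q < 1 := by simpa [Real.sqrt_lt' one_pos] using hq.2
  have hC : 0 ≤ C := by simpa using (sq_nonneg _).trans (h 0)
  have dist_succ_le : ∀ k, dist (x k) (x (k + 1)) ≤ √C * √q ^ k := fun k => by
    refine pow_le_pow_iff_left₀ dist_nonneg (by positivity) two_ne_zero |>.1 ?_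
    rw [mul_pow, pow_right_comm, Real.sq_sqrt hC, Real.sq_sqrt hq.1.le]
    exact h k
  obtain ⟨y, hy, hlim⟩ := cauchySeq_tendsto_of_isComplete hs hx
    (cauchySeq_of_le_geometric _ _ hτ dist_succ_le)
  have : 0 < 1 - √q := sub_pos.2 hτ
  refine ⟨y, hy, √C / (1 - √q) + 1, by positivity, √q, ⟨Real.sqrt_pos.2 hq.1, hτ⟩, fun k => ?_⟩
  calc dist (x k) y ≤ √C * √q ^ k / (1 - √q) :=
        dist_le_of_le_geometric_of_tendsto _ _ hτ dist_succ_le hlim k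
    _ = √C / (1 - √q) * √q ^ k := by ring
    _ ≤ (√C / (1 - √q) + 1) * √q ^ k := by gcongr; linarith

end GeometricRates

section SymmetricOperators

variable {E : Type*} [NormedAddCommGroup E] [InnerProductSpace ℝ E]

theorem inner_map_self_le_opNorm_mul_sq (T : E →L[ℝ] E) (x : E) : ⟪x, T x⟫ ≤ ‖T‖ * ‖x‖ ^ 2 :=
  calc ⟪x, T x⟫ ≤ ‖x‖ * ‖T x‖ := real_inner_le_norm x (T x)
    _ ≤ ‖x‖ * (‖T‖ * ‖x‖) := by gcongr; exact T.le_opNorm x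
    _ = ‖T‖ * ‖x‖ ^ 2 := by ring

theorem inner_map_self_eq_add {T : E →L[ℝ] E} (hT : T.IsSymmetric) (x y : E) :
    ⟪y, T y⟫ = ⟪x, T x⟫ + 2 * ⟪T x, y - x⟫ + ⟪y - x, T (y - x)⟫ := by
  have hxy : ⟪T x, y⟫ = ⟪x, T y⟫ := hT x y
  simp only [map_sub, inner_sub_left, inner_sub_right, hxy, real_inner_comm x (T x),
    real_inner_comm (T x) y]
  ring

-- The open mapping theorem provides `z` with `T z = T y` and `‖z‖ ≤ K ‖T y‖`;
-- then `⟪y, T y⟫ = ⟪y, T z⟫ = ⟪T y, z⟫`.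
theorem exists_inner_map_self_le_mul_sq_norm [CompleteSpace E] {T : E →L[ℝ] E}
    (hT : T.IsSymmetric) (hrange : IsClosed (Set.range T)) :
    ∃ K, ∀ y, ⟪y, T y⟫ ≤ K * ‖T y‖ ^ 2 := by
  have : CompleteSpace T.range := hrange.completeSpace_coe
  obtain ⟨K, -, preimage⟩ :=
    T.rangeRestrict.exists_preimage_norm_le (LinearMap.surjective_rangeRestrict T.toLinearMap)
  refine ⟨K, fun y => ?_⟩
  obtain ⟨z, hz, norm_z_le⟩ := preimage (T.rangeRestrict y)
  have hTz : T z = T y := congrArg Subtype.val hz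
  calc ⟪y, T y⟫ = ⟪T y, z⟫ := (congrArg (inner ℝ y) hTz.symm).trans (hT y z).symm
    _ ≤ ‖T y‖ * ‖z‖ := real_inner_le_norm _ _
    _ ≤ ‖T y‖ * (K * ‖T y‖) := by gcongr; exact norm_z_le
    _ = K * ‖T y‖ ^ 2 := by ring

theorem exists_inner_map_self_le_mul_sq_norm_starProjection {T : E →L[ℝ] E} (hT : T.IsSymmetric)
    (V : Submodule ℝ E) [FiniteDimensional ℝ V] :
    ∃ K, ∀ y ∈ V, ⟪y, T y⟫ ≤ K * ‖V.starProjection (T y)‖ ^ 2 := by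
  let compression : V →L[ℝ] V := V.orthogonalProjectionOnto ∘L T ∘L V.subtypeL
  have compression_symm : compression.IsSymmetric := fun y z => by
    change ⟪V.orthogonalProjectionOnto (T y), z⟫ = ⟪y, V.orthogonalProjectionOnto (T z)⟫
    rw [V.inner_orthogonalProjectionOnto_eq_of_mem_right,
      V.inner_orthogonalProjectionOnto_eq_of_mem_left]
    exact hT y z
  obtain ⟨K, bound⟩ := exists_inner_map_self_le_mul_sq_norm compression_symm
    (compression.range.closed_of_finiteDimensional)
  refine ⟨K, fun y hy => ?_⟩
  rw [← V.inner_orthogonalProjectionOnto_eq_of_mem_left ⟨y, hy⟩ (T y)]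
  exact bound ⟨y, hy⟩

theorem exists_forall_inner_map_self_le_mul_sq_norm_starProjection {ι : Type*} [Finite ι]
    {T : E →L[ℝ] E} (hT : T.IsSymmetric) (V : ι → Submodule ℝ E)
    [∀ i, FiniteDimensional ℝ (V i)] :
    ∃ K ≥ 0, ∀ i, ∀ y ∈ V i, ⟪y, T y⟫ ≤ K * ‖(V i).starProjection (T y)‖ ^ 2 := by
  choose K bound using fun i => exists_inner_map_self_le_mul_sq_norm_starProjection hT (V i)
  obtain ⟨M, hM⟩ := Finite.exists_le K
  refine ⟨max M 0, le_max_right M 0, fun i y hy => (bound i y hy).trans ?_⟩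
  gcongr
  exact (hM i).trans (le_max_left M 0)

end SymmetricOperators

section ProjectionOntoSphere

variable {E : Type*} [NormedAddCommGroup E] [InnerProductSpace ℝ E]

theorem inner_le_inner_of_norm_sub_le {u y z : E} (hyz : ‖y‖ = ‖z‖) (h : ‖y - u‖ ≤ ‖z - u‖) :
    ⟪u, z⟫ ≤ ⟪u, y⟫ := by
  have hsq : ‖y - u‖ ^ 2 ≤ ‖z - u‖ ^ 2 := by gcongr
  rw [norm_sub_sq_real, norm_sub_sq_real, hyz, real_inner_comm u y, real_inner_comm u z] at hsq
  linarith

theorem inner_sub_eq_neg_sq_norm_div_two {x y : E} (hxy : ‖x‖ = ‖y‖) :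
    ⟪x, y - x⟫ = -‖y - x‖ ^ 2 / 2 := by
  rw [norm_sub_sq_real, inner_sub_right, real_inner_self_eq_norm_sq, real_inner_comm x y, hxy]
  ring

variable {V : Submodule ℝ E} [V.HasOrthogonalProjection]

theorem inner_starProjection_of_mem {z : E} (hz : z ∈ V) (u : E) :
    ⟪V.starProjection u, z⟫ = ⟪u, z⟫ := by
  rw [V.inner_starProjection_left_eq_right, V.starProjection_eq_self_iff.2 hz]

theorem norm_starProjection_le_inner_of_forall_inner_le {u y : E} (hy : y ∈ V)
    (hmax : ∀ z ∈ V, ‖z‖ = 1 → ⟪u, z⟫ ≤ ⟪u, y⟫) : ‖V.starProjection u‖ ≤ ⟪u, y⟫ := by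
  set p := V.starProjection u with hp
  rcases eq_or_ne p 0 with hp0 | hp0
  · rw [← inner_starProjection_of_mem hy, ← hp, hp0, norm_zero, inner_zero_left]
  · have hpV : p ∈ V := V.starProjection_apply_mem u
    have hnorm : ‖p‖ ≠ 0 := norm_ne_zero_iff.2 hp0
    calc ‖p‖ = ‖p‖⁻¹ * ⟪p, p⟫ := by rw [real_inner_self_eq_norm_sq]; field_simp
      _ = ⟪u, ‖p‖⁻¹ • p⟫ := by rw [inner_smul_right, inner_starProjection_of_mem hpV]
      _ ≤ ⟪u, y⟫ := hmax _ (V.smul_mem _ hpV) (norm_smul_inv_norm hp0)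

theorem starProjection_eq_inner_smul_of_forall_inner_le {u y : E} (hy : y ∈ V) (hy1 : ‖y‖ = 1)
    (hmax : ∀ z ∈ V, ‖z‖ = 1 → ⟪u, z⟫ ≤ ⟪u, y⟫) : V.starProjection u = ⟪u, y⟫ • y := by
  have hle := norm_starProjection_le_inner_of_forall_inner_le hy hmax
  have hge := real_inner_le_norm (V.starProjection u) y
  rw [inner_starProjection_of_mem hy, hy1, mul_one] at hge
  have hnorm := le_antisymm hle hge
  have haligned : ‖y‖ • V.starProjection u = ‖V.starProjection u‖ • y := by
    rw [← inner_eq_norm_mul_iff_real, inner_starProjection_of_mem hy, hy1, mul_one, hnorm]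
  rwa [hy1, one_smul, hnorm] at haligned

theorem mul_norm_starProjection_le_of_forall_inner_le {x y w : E} {α : ℝ} (hα : 0 ≤ α)
    (hx : ‖x‖ = 1) (hy : y ∈ V) (hy1 : ‖y‖ = 1) (hw : ⟪w, x⟫ = 0)
    (hmax : ∀ z ∈ V, ‖z‖ = 1 → ⟪x - α • w, z⟫ ≤ ⟪x - α • w, y⟫) :
    α * ‖V.starProjection w‖ ≤ (2 + α * ‖w‖) * ‖y - x‖ := by
  have norm_target : ‖x - α • w‖ ≤ 1 + α * ‖w‖ := by
    simpa [hx, norm_smul, abs_of_nonneg hα] using norm_sub_le x (α • w)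
  have inner_target_self : ⟪x - α • w, x⟫ = 1 := by
    rw [inner_sub_left, real_inner_smul_left, hw, real_inner_self_eq_norm_sq, hx]
    norm_num
  have smul_projection :
      α • V.starProjection w = V.starProjection (x - y) - ⟪x - α • w, y - x⟫ • y := by
    have hproj := starProjection_eq_inner_smul_of_forall_inner_le hy hy1 hmax
    rw [map_sub, map_smul] at hproj
    rw [inner_sub_right, inner_target_self, sub_smul, ← hproj, map_sub,
      V.starProjection_eq_self_iff.2 hy, one_smul]
    abel
  calc α * ‖V.starProjection w‖ = ‖α • V.starProjection w‖ := by
        rw [norm_smul, Real.norm_of_nonneg hα]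
    _ ≤ ‖V.starProjection (x - y)‖ + |⟪x - α • w, y - x⟫| := by
        rw [smul_projection]
        simpa [norm_smul, hy1] using
          norm_sub_le (V.starProjection (x - y)) (⟪x - α • w, y - x⟫ • y)
    _ ≤ ‖y - x‖ + (1 + α * ‖w‖) * ‖y - x‖ := by
        gcongr
        · rw [norm_sub_rev y x]
          exact V.norm_starProjection_apply_le (x - y)
        · exact (abs_real_inner_le_norm _ _).trans (by gcongr)
    _ = (2 + α * ‖w‖) * ‖y - x‖ := by ring

end ProjectionOntoSphere

section Pencil

variable {E : Type*} [NormedAddCommGroup E] [InnerProductSpace ℝ E] {a b : E →L[ℝ] E} {x y : E}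

/-- The generalized Rayleigh quotient `⟪x, b x⟫ / ⟪x, a x⟫` of the operator pencil `(a, b)`: the
objective `G` on its domain. It takes the junk value `0` where `⟪x, a x⟫ = 0`. -/
def pencilQuotient (a b : E →L[ℝ] E) (x : E) : ℝ :=
  ⟪x, b x⟫ / ⟪x, a x⟫

/-- The residual `b x - λ a x` of the generalized eigenvalue equation at the Rayleigh quotient
`λ` of `x`. The iteration moves against it before projecting. -/
def pencilResidual (a b : E →L[ℝ] E) (x : E) : E :=
  b x - pencilQuotient a b x • a x

theorem pencilQuotient_mul_inner (hx : ⟪x, a x⟫ ≠ 0) :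
    pencilQuotient a b x * ⟪x, a x⟫ = ⟪x, b x⟫ :=
  div_mul_cancel₀ _ hx

theorem inner_pencilResidual_self (hx : ⟪x, a x⟫ ≠ 0) : ⟪pencilResidual a b x, x⟫ = 0 := by
  rw [pencilResidual, inner_sub_left, real_inner_smul_left, real_inner_comm, real_inner_comm x,
    pencilQuotient_mul_inner hx, sub_self]

theorem continuousAt_pencilResidual (hx : ⟪x, a x⟫ ≠ 0) :
    ContinuousAt (pencilResidual a b) x := by
  unfold pencilResidual pencilQuotient
  fun_prop (disch := exact hx)

theorem norm_map_sub_smul_le {c C : ℝ} (hc : 0 ≤ c) (hcC : c ≤ C) (x : E) :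
    ‖b x - c • a x‖ ≤ (‖b‖ + C * ‖a‖) * ‖x‖ :=
  calc ‖b x - c • a x‖ = ‖(b - c • a) x‖ := rfl
    _ ≤ (‖b‖ + ‖c • a‖) * ‖x‖ := (b - c • a).le_of_opNorm_le (norm_sub_le b (c • a)) x
    _ ≤ (‖b‖ + C * ‖a‖) * ‖x‖ := by rw [norm_smul, Real.norm_of_nonneg hc]; gcongr

theorem inner_map_self_add_le_of_inner_le (ha : a.IsPositive) (hb : b.IsSymmetric) {α : ℝ}
    (hα : 0 < α) (hxy : ‖x‖ = ‖y‖) (hx : ⟪x, a x⟫ ≠ 0) (hquot : 0 ≤ pencilQuotient a b x)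
    (hmax : ⟪x - α • pencilResidual a b x, x⟫ ≤ ⟪x - α • pencilResidual a b x, y⟫) :
    ⟪y, b y⟫ + (1 / α - ‖b‖) * ‖y - x‖ ^ 2 ≤ pencilQuotient a b x * ⟪y, a y⟫ := by
  have residual_le : 2 * ⟪pencilResidual a b x, y - x⟫ ≤ -(1 / α * ‖y - x‖ ^ 2) := by
    rw [← sub_nonneg, ← inner_sub_right, inner_sub_left, real_inner_smul_left,
      inner_sub_eq_neg_sq_norm_div_two hxy] at hmax
    rw [← mul_le_mul_iff_right₀ hα]
    field_simp
    linarith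
  have expand : ⟪y, b y⟫ - pencilQuotient a b x * ⟪y, a y⟫ =
      2 * ⟪pencilResidual a b x, y - x⟫ + ⟪y - x, b (y - x)⟫
        - pencilQuotient a b x * ⟪y - x, a (y - x)⟫ := by
    rw [inner_map_self_eq_add hb x y, inner_map_self_eq_add ha.isSymmetric x y, pencilResidual,
      inner_sub_left (b x), real_inner_smul_left, ← pencilQuotient_mul_inner hx]
    ring
  have := inner_map_self_le_opNorm_mul_sq b (y - x)
  have := mul_nonneg hquot (ha.inner_nonneg_right (y - x))
  linarith

end Pencil

section PGSA

variable {ι E : Type*} [NormedAddCommGroup E] [InnerProductSpace ℝ E]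

/-- The unit vectors in the union of the subspaces `V i`, the feasible set of the iteration. The
sparse unit sphere is the case of the coordinate subspaces of dimension `r`. -/
def unitSphereOfUnion (V : ι → Submodule ℝ E) : Set E :=
  {z | ‖z‖ = 1 ∧ ∃ i, z ∈ V i}

theorem isCompact_unitSphereOfUnion [Finite ι] (V : ι → Submodule ℝ E)
    [∀ i, FiniteDimensional ℝ (V i)] : IsCompact (unitSphereOfUnion V) := by
  have eq_iUnion : unitSphereOfUnion V =
      ⋃ i, ((↑) : V i → E) '' Metric.sphere (0 : V i) 1 := by
    ext z
    simp [unitSphereOfUnion, and_comm]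
  rw [eq_iUnion]
  exact isCompact_iUnion fun i => (isCompact_sphere 0 1).image continuous_subtype_val

/-- The standing assumptions on the operator pencil `(a, b)`: both quadratic forms are given by
symmetric operators, the denominator is nonnegative everywhere, and the numerator is positive on
the feasible set. -/
structure IsAdmissiblePencil (V : ι → Submodule ℝ E) (a b : E →L[ℝ] E) : Prop where
  isPositive : a.IsPositive
  isSymmetric : b.IsSymmetric
  inner_pos : ∀ z ∈ unitSphereOfUnion V, 0 < ⟪z, b z⟫

/-- A run `x` of the proximity-gradient-subgradient algorithm with step sizes `α` for minimizing
`pencilQuotient a b` over `unitSphereOfUnion V`, started in the domain of the objective. -/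
structure IsPGSA (V : ι → Submodule ℝ E) (a b : E →L[ℝ] E) (αlo αhi : ℝ) (α : ℕ → ℝ)
    (x : ℕ → E) : Prop where
  lo_pos : 0 < αlo
  hi_mul_lt_one : αhi * ‖b‖ < 1
  step_mem : ∀ k, α k ∈ Set.Icc αlo αhi
  inner_zero_ne : ⟪x 0, a (x 0)⟫ ≠ 0
  mem : ∀ k, x k ∈ unitSphereOfUnion V
  isMinOn : ∀ k, IsMinOn (fun z => ‖z - (x k - α k • pencilResidual a b (x k))‖)
    (unitSphereOfUnion V) (x (k + 1))

variable {V : ι → Submodule ℝ E} {a b : E →L[ℝ] E}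

namespace IsAdmissiblePencil

theorem pencilQuotient_pos (hab : IsAdmissiblePencil V a b) {z : E}
    (hz : z ∈ unitSphereOfUnion V) (haz : 0 < ⟪z, a z⟫) : 0 < pencilQuotient a b z :=
  div_pos (hab.inner_pos z hz) haz

theorem inner_pos_of_ne (hab : IsAdmissiblePencil V a b) {z : E} (haz : ⟪z, a z⟫ ≠ 0) :
    0 < ⟪z, a z⟫ :=
  (hab.isPositive.inner_nonneg_right z).lt_of_ne' haz

theorem exists_pos_le_inner [Finite ι] [∀ i, FiniteDimensional ℝ (V i)]
    (hab : IsAdmissiblePencil V a b) :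
    ∃ m > 0, ∀ z ∈ unitSphereOfUnion V, m ≤ ⟪z, b z⟫ :=
  (isCompact_unitSphereOfUnion V).exists_forall_le' (by fun_prop) hab.inner_pos

end IsAdmissiblePencil

namespace IsPGSA

variable {αlo αhi : ℝ} {α : ℕ → ℝ} {x : ℕ → E}

theorem norm_eq_one (hx : IsPGSA V a b αlo αhi α x) (k : ℕ) : ‖x k‖ = 1 :=
  (hx.mem k).1

theorem step_pos (hx : IsPGSA V a b αlo αhi α x) (k : ℕ) : 0 < α k :=
  hx.lo_pos.trans_le (hx.step_mem k).1

theorem hi_pos (hx : IsPGSA V a b αlo αhi α x) : 0 < αhi :=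
  (hx.step_pos 0).trans_le (hx.step_mem 0).2

theorem decrease_rate_pos (hx : IsPGSA V a b αlo αhi α x) : 0 < 1 / αhi - ‖b‖ := by
  rw [sub_pos, lt_div_iff₀' hx.hi_pos]
  exact hx.hi_mul_lt_one

theorem inner_le_inner_succ (hx : IsPGSA V a b αlo αhi α x) (k : ℕ) {z : E}
    (hz : z ∈ unitSphereOfUnion V) :
    ⟪x k - α k • pencilResidual a b (x k), z⟫ ≤
      ⟪x k - α k • pencilResidual a b (x k), x (k + 1)⟫ :=
  inner_le_inner_of_norm_sub_le ((hx.norm_eq_one _).trans hz.1.symm) (hx.isMinOn k hz)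

theorem inner_succ_add_le (hx : IsPGSA V a b αlo αhi α x) (hab : IsAdmissiblePencil V a b) {k : ℕ}
    (hk : 0 < ⟪x k, a (x k)⟫) :
    ⟪x (k + 1), b (x (k + 1))⟫ + (1 / αhi - ‖b‖) * ‖x (k + 1) - x k‖ ^ 2 ≤
      pencilQuotient a b (x k) * ⟪x (k + 1), a (x (k + 1))⟫ := by
  refine le_trans ?_ <| inner_map_self_add_le_of_inner_le hab.isPositive hab.isSymmetric
    (hx.step_pos k) ((hx.norm_eq_one k).trans (hx.norm_eq_one _).symm) hk.ne'
    (hab.pencilQuotient_pos (hx.mem k) hk).le (hx.inner_le_inner_succ k (hx.mem k))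
  gcongr
  · exact hx.step_pos k
  · exact (hx.step_mem k).2

theorem inner_pos (hx : IsPGSA V a b αlo αhi α x) (hab : IsAdmissiblePencil V a b) (k : ℕ) :
    0 < ⟪x k, a (x k)⟫ := by
  induction k with
  | zero => exact hab.inner_pos_of_ne hx.inner_zero_ne
  | succ k ih =>
    refine hab.inner_pos_of_ne fun hzero => ?_
    have hdescent := hx.inner_succ_add_le hab ih
    rw [hzero, mul_zero] at hdescent
    have := hab.inner_pos _ (hx.mem (k + 1))
    have := mul_nonneg hx.decrease_rate_pos.le (sq_nonneg ‖x (k + 1) - x k‖)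
    linarith

theorem pencilQuotient_pos (hx : IsPGSA V a b αlo αhi α x) (hab : IsAdmissiblePencil V a b)
    (k : ℕ) : 0 < pencilQuotient a b (x k) :=
  hab.pencilQuotient_pos (hx.mem k) (hx.inner_pos hab k)

theorem mul_sq_norm_sub_le_sub_mul_inner (hx : IsPGSA V a b αlo αhi α x)
    (hab : IsAdmissiblePencil V a b) (k : ℕ) :
    (1 / αhi - ‖b‖) * ‖x (k + 1) - x k‖ ^ 2 ≤
      (pencilQuotient a b (x k) - pencilQuotient a b (x (k + 1))) *
        ⟪x (k + 1), a (x (k + 1))⟫ := by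
  have hdescent := hx.inner_succ_add_le hab (hx.inner_pos hab k)
  rw [← pencilQuotient_mul_inner (hx.inner_pos hab (k + 1)).ne'] at hdescent
  linarith

theorem antitone_pencilQuotient (hx : IsPGSA V a b αlo αhi α x)
    (hab : IsAdmissiblePencil V a b) : Antitone fun k => pencilQuotient a b (x k) := by
  refine antitone_nat_of_succ_le fun k => sub_nonneg.1 ?_
  refine nonneg_of_mul_nonneg_left ?_ (hx.inner_pos hab (k + 1))
  exact (mul_nonneg hx.decrease_rate_pos.le (sq_nonneg _)).trans
    (hx.mul_sq_norm_sub_le_sub_mul_inner hab k)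

theorem exists_sq_norm_sub_le (hx : IsPGSA V a b αlo αhi α x) (hab : IsAdmissiblePencil V a b) :
    ∃ M ≥ 0, ∀ k, ‖x (k + 1) - x k‖ ^ 2 ≤
      M * (pencilQuotient a b (x k) - pencilQuotient a b (x (k + 1))) := by
  have hrate := hx.decrease_rate_pos
  refine ⟨‖a‖ / (1 / αhi - ‖b‖), by positivity, fun k => ?_⟩
  have inner_le_norm : ⟪x (k + 1), a (x (k + 1))⟫ ≤ ‖a‖ := by
    simpa [hx.norm_eq_one] using inner_map_self_le_opNorm_mul_sq a (x (k + 1))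
  have hdecrease := sub_nonneg.2 (hx.antitone_pencilQuotient hab k.le_succ)
  rw [div_mul_eq_mul_div, le_div_iff₀' hrate]
  calc (1 / αhi - ‖b‖) * ‖x (k + 1) - x k‖ ^ 2
      ≤ _ := hx.mul_sq_norm_sub_le_sub_mul_inner hab k
    _ ≤ (pencilQuotient a b (x k) - pencilQuotient a b (x (k + 1))) * ‖a‖ := by gcongr
    _ = _ := mul_comm _ _

theorem exists_pos_le_inner [Finite ι] [∀ i, FiniteDimensional ℝ (V i)]
    (hx : IsPGSA V a b αlo αhi α x) (hab : IsAdmissiblePencil V a b) :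
    ∃ m > 0, ∀ k, m ≤ ⟪x k, a (x k)⟫ := by
  obtain ⟨m, hm, hmle⟩ := hab.exists_pos_le_inner
  have hquot := hx.pencilQuotient_pos hab
  refine ⟨m / pencilQuotient a b (x 0), div_pos hm (hquot 0), fun k => ?_⟩
  rw [div_le_iff₀' (hquot 0)]
  calc m ≤ ⟪x k, b (x k)⟫ := hmle _ (hx.mem k)
    _ = pencilQuotient a b (x k) * ⟪x k, a (x k)⟫ :=
        (pencilQuotient_mul_inner (hx.inner_pos hab k).ne').symm
    _ ≤ pencilQuotient a b (x 0) * ⟪x k, a (x k)⟫ := by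
        gcongr
        · exact (hx.inner_pos hab k).le
        · exact hx.antitone_pencilQuotient hab k.zero_le

theorem norm_pencilResidual_le (hx : IsPGSA V a b αlo αhi α x) (hab : IsAdmissiblePencil V a b)
    (k : ℕ) : ‖pencilResidual a b (x k)‖ ≤ ‖b‖ + pencilQuotient a b (x 0) * ‖a‖ := by
  simpa [hx.norm_eq_one, pencilResidual] using norm_map_sub_smul_le (hx.pencilQuotient_pos hab k).le
    (hx.antitone_pencilQuotient hab k.zero_le) (x k)

theorem exists_norm_starProjection_pencilResidual_le [∀ i, (V i).HasOrthogonalProjection]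
    (hx : IsPGSA V a b αlo αhi α x) (hab : IsAdmissiblePencil V a b) :
    ∃ K, ∀ k i, x (k + 1) ∈ V i →
      ‖(V i).starProjection (pencilResidual a b (x k))‖ ≤ K * ‖x (k + 1) - x k‖ := by
  set W := ‖b‖ + pencilQuotient a b (x 0) * ‖a‖
  refine ⟨(2 + αhi * W) / αlo, fun k i hi => ?_⟩
  rw [div_mul_eq_mul_div, le_div_iff₀' hx.lo_pos]
  calc αlo * ‖(V i).starProjection (pencilResidual a b (x k))‖
      ≤ α k * ‖(V i).starProjection (pencilResidual a b (x k))‖ := by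
        gcongr
        exact (hx.step_mem k).1
    _ ≤ (2 + α k * ‖pencilResidual a b (x k)‖) * ‖x (k + 1) - x k‖ :=
        mul_norm_starProjection_le_of_forall_inner_le (hx.step_pos k).le (hx.norm_eq_one k) hi
          (hx.norm_eq_one _) (inner_pencilResidual_self (hx.inner_pos hab k).ne')
          fun z hz hz1 => hx.inner_le_inner_succ k ⟨hz1, i, hz⟩
    _ ≤ (2 + αhi * W) * ‖x (k + 1) - x k‖ := by
        gcongr
        · exact hx.hi_pos.le
        · exact (hx.step_mem k).2
        · exact hx.norm_pencilResidual_le hab k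

theorem exists_norm_starProjection_map_sub_smul_le [∀ i, (V i).HasOrthogonalProjection]
    (hx : IsPGSA V a b αlo αhi α x) (hab : IsAdmissiblePencil V a b) {θ : ℝ}
    (hθ : ∀ k, θ ≤ pencilQuotient a b (x k)) :
    ∃ K, ∀ k i, x (k + 1) ∈ V i →
      ‖(V i).starProjection (b (x (k + 1)) - θ • a (x (k + 1)))‖ ≤
        K * ‖x (k + 1) - x k‖ + ‖a‖ * (pencilQuotient a b (x k) - θ) := by
  obtain ⟨K, hK⟩ := hx.exists_norm_starProjection_pencilResidual_le hab
  set W := ‖b‖ + pencilQuotient a b (x 0) * ‖a‖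
  refine ⟨K + W, fun k i hi => ?_⟩
  set c := pencilQuotient a b (x k)
  set d := x (k + 1) - x k with hd
  have split : b (x (k + 1)) - θ • a (x (k + 1)) =
      pencilResidual a b (x k) + ((b d - c • a d) + (c - θ) • a (x (k + 1))) := by
    rw [pencilResidual, hd, map_sub, map_sub]
    module
  have shift_le : ‖(c - θ) • a (x (k + 1))‖ ≤ ‖a‖ * (c - θ) := by
    rw [norm_smul, Real.norm_of_nonneg (sub_nonneg.2 (hθ k)), mul_comm]
    gcongr
    · exact sub_nonneg.2 (hθ k)
    · simpa [hx.norm_eq_one] using a.le_opNorm (x (k + 1))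
  have perturbation_le : ‖b d - c • a d‖ ≤ W * ‖d‖ :=
    norm_map_sub_smul_le (hx.pencilQuotient_pos hab k).le
      (hx.antitone_pencilQuotient hab k.zero_le) d
  calc ‖(V i).starProjection (b (x (k + 1)) - θ • a (x (k + 1)))‖
      ≤ ‖(V i).starProjection (pencilResidual a b (x k))‖ +
          ‖(b d - c • a d) + (c - θ) • a (x (k + 1))‖ := by
        rw [split, map_add]
        exact (norm_add_le _ _).trans (by gcongr; exact (V i).norm_starProjection_apply_le _)
    _ ≤ K * ‖d‖ + (W * ‖d‖ + ‖a‖ * (c - θ)) :=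
        add_le_add (hK k i hi) (norm_add_le_of_le perturbation_le shift_le)
    _ = (K + W) * ‖d‖ + ‖a‖ * (c - θ) := by ring

theorem exists_gap_le_mul_sq_norm_add_sq_gap [Finite ι] [∀ i, FiniteDimensional ℝ (V i)]
    (hx : IsPGSA V a b αlo αhi α x) (hab : IsAdmissiblePencil V a b) {θ : ℝ}
    (hθ : ∀ k, θ ≤ pencilQuotient a b (x k)) :
    ∃ K ≥ 0, ∀ k, pencilQuotient a b (x (k + 1)) - θ ≤
      K * (‖x (k + 1) - x k‖ ^ 2 + (pencilQuotient a b (x k) - θ) ^ 2) := by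
  have shifted_symm : (b - θ • a).IsSymmetric :=
    hab.isSymmetric.sub (hab.isPositive.isSymmetric.smul rfl)
  obtain ⟨K, hK0, error_bound⟩ :=
    exists_forall_inner_map_self_le_mul_sq_norm_starProjection shifted_symm V
  obtain ⟨R, hR⟩ := hx.exists_norm_starProjection_map_sub_smul_le hab hθ
  obtain ⟨m, hm, hmle⟩ := hx.exists_pos_le_inner hab
  refine ⟨2 * K * (R ^ 2 + ‖a‖ ^ 2) / m, by positivity, fun k => ?_⟩
  obtain ⟨i, hi⟩ := (hx.mem (k + 1)).2
  set gap := pencilQuotient a b (x k) - θ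
  set gap' := pencilQuotient a b (x (k + 1)) - θ with hgap'
  set D := ‖x (k + 1) - x k‖
  have hgap'_nonneg : 0 ≤ gap' := sub_nonneg.2 (hθ (k + 1))
  rw [div_mul_eq_mul_div, le_div_iff₀ hm]
  calc gap' * m ≤ gap' * ⟪x (k + 1), a (x (k + 1))⟫ := by gcongr; exact hmle (k + 1)
    _ = ⟪x (k + 1), b (x (k + 1)) - θ • a (x (k + 1))⟫ := by
        rw [hgap', sub_mul, pencilQuotient_mul_inner (hx.inner_pos hab _).ne', inner_sub_right,
          real_inner_smul_right]
    _ ≤ K * ‖(V i).starProjection (b (x (k + 1)) - θ • a (x (k + 1)))‖ ^ 2 :=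
        error_bound i _ hi
    _ ≤ K * (R * D + ‖a‖ * gap) ^ 2 := by gcongr; exact hR k i hi
    _ ≤ K * (2 * ((R * D) ^ 2 + (‖a‖ * gap) ^ 2)) := by gcongr; exact add_sq_le
    _ ≤ K * (2 * ((R ^ 2 + ‖a‖ ^ 2) * (D ^ 2 + gap ^ 2))) := by
        gcongr
        nlinarith [sq_nonneg (R * gap), sq_nonneg (‖a‖ * D)]
    _ = 2 * K * (R ^ 2 + ‖a‖ ^ 2) * (D ^ 2 + gap ^ 2) := by ring

theorem exists_gap_recursion [Finite ι] [∀ i, FiniteDimensional ℝ (V i)]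
    (hx : IsPGSA V a b αlo αhi α x) (hab : IsAdmissiblePencil V a b) {θ : ℝ}
    (hθ : ∀ k, θ ≤ pencilQuotient a b (x k)) :
    ∃ K ≥ 0, ∀ k, pencilQuotient a b (x (k + 1)) - θ ≤
      K * ((pencilQuotient a b (x k) - θ) - (pencilQuotient a b (x (k + 1)) - θ) +
        (pencilQuotient a b (x k) - θ) ^ 2) := by
  obtain ⟨K, hK, hgap⟩ := hx.exists_gap_le_mul_sq_norm_add_sq_gap hab hθ
  obtain ⟨M, hM, hdecrease⟩ := hx.exists_sq_norm_sub_le hab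
  refine ⟨K * (M + 1), by positivity, fun k => (hgap k).trans ?_⟩
  have hanti := hx.antitone_pencilQuotient hab k.le_succ
  rw [mul_assoc]
  gcongr
  nlinarith [hdecrease k, mul_nonneg hM (sq_nonneg (pencilQuotient a b (x k) - θ))]

theorem exists_tendsto_pencilQuotient (hx : IsPGSA V a b αlo αhi α x)
    (hab : IsAdmissiblePencil V a b) :
    ∃ θ, Tendsto (fun k => pencilQuotient a b (x k)) atTop (𝓝 θ) :=
  ⟨_, tendsto_atTop_ciInf (hx.antitone_pencilQuotient hab)
    ⟨0, Set.forall_mem_range.2 fun k => (hx.pencilQuotient_pos hab k).le⟩⟩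

theorem exists_sq_norm_sub_le_geometric [Finite ι] [∀ i, FiniteDimensional ℝ (V i)]
    (hx : IsPGSA V a b αlo αhi α x) (hab : IsAdmissiblePencil V a b) :
    ∃ C, ∃ q ∈ Set.Ioo (0 : ℝ) 1, ∀ k, ‖x (k + 1) - x k‖ ^ 2 ≤ C * q ^ k := by
  obtain ⟨θ, hlim⟩ := hx.exists_tendsto_pencilQuotient hab
  have hθ : ∀ k, θ ≤ pencilQuotient a b (x k) :=
    (hx.antitone_pencilQuotient hab).le_of_tendsto hlim
  obtain ⟨K, hK, hrec⟩ := hx.exists_gap_recursion hab hθ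
  obtain ⟨C, -, q, hq, hgap⟩ := exists_le_geometric_of_le_mul_sub_add_sq hK
    (fun k => sub_nonneg.2 (hθ k)) (by simpa using hlim.sub_const θ) hrec
  obtain ⟨M, hM, hdecrease⟩ := hx.exists_sq_norm_sub_le hab
  refine ⟨M * C, q, hq, fun k => (hdecrease k).trans ?_⟩
  rw [mul_assoc]
  gcongr
  linarith [hgap k, hθ (k + 1)]

theorem inner_pos_of_tendsto [Finite ι] [∀ i, FiniteDimensional ℝ (V i)]
    (hx : IsPGSA V a b αlo αhi α x) (hab : IsAdmissiblePencil V a b) {y : E}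
    (hlim : Tendsto x atTop (𝓝 y)) : 0 < ⟪y, a y⟫ := by
  obtain ⟨m, hm, hmle⟩ := hx.exists_pos_le_inner hab
  have hcont : Continuous fun z => ⟪z, a z⟫ := by fun_prop
  exact hm.trans_le (ge_of_tendsto' ((hcont.tendsto y).comp hlim) hmle)

theorem exists_forall_inner_le_of_tendsto (hx : IsPGSA V a b αlo αhi α x) {y : E}
    (hlim : Tendsto x atTop (𝓝 y)) (hy : ⟪y, a y⟫ ≠ 0) :
    ∃ β > (0 : ℝ), ∀ z ∈ unitSphereOfUnion V,
      ⟪y - β • pencilResidual a b y, z⟫ ≤ ⟪y - β • pencilResidual a b y, y⟫ := by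
  obtain ⟨β, hβ, φ, hφ, hαφ⟩ := isCompact_Icc.tendsto_subseq hx.step_mem
  have hxφ := hlim.comp hφ.tendsto_atTop
  have hxφ_succ : Tendsto (fun j => x (φ j + 1)) atTop (𝓝 y) :=
    ((tendsto_add_atTop_iff_nat 1).2 hlim).comp hφ.tendsto_atTop
  have htarget := hxφ.sub (hαφ.smul ((continuousAt_pencilResidual (b := b) hy).tendsto.comp hxφ))
  exact ⟨β, hx.lo_pos.trans_le hβ.1, fun z hz => le_of_tendsto_of_tendsto'
    (htarget.inner tendsto_const_nhds) (htarget.inner hxφ_succ)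
    fun j => hx.inner_le_inner_succ (φ j) hz⟩

theorem pencilResidual_mem_orthogonal_of_tendsto [∀ i, (V i).HasOrthogonalProjection]
    (hx : IsPGSA V a b αlo αhi α x) {y : E} (hlim : Tendsto x atTop (𝓝 y))
    (hy : ⟪y, a y⟫ ≠ 0) {i : ι} (hi : y ∈ V i) : pencilResidual a b y ∈ (V i)ᗮ := by
  have hy1 : ‖y‖ = 1 := tendsto_nhds_unique hlim.norm (by simp [hx.norm_eq_one])
  obtain ⟨β, hβ, hmax⟩ := hx.exists_forall_inner_le_of_tendsto hlim hy
  have hproj := mul_norm_starProjection_le_of_forall_inner_le hβ.le hy1 hi hy1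
    (inner_pencilResidual_self (b := b) hy) fun z hz hz1 => hmax z ⟨hz1, i, hz⟩
  rw [sub_self, norm_zero, mul_zero] at hproj
  rw [← (V i).starProjection_apply_eq_zero_iff, ← norm_le_zero_iff]
  exact nonpos_of_mul_nonpos_right hproj hβ

theorem exists_geometric_convergence [Finite ι] [∀ i, FiniteDimensional ℝ (V i)]
    (hx : IsPGSA V a b αlo αhi α x) (hab : IsAdmissiblePencil V a b) :
    ∃ y ∈ unitSphereOfUnion V, ∃ ρ > 0, ∃ τ ∈ Set.Ioo (0 : ℝ) 1,
      (∀ k, ‖x k - y‖ ≤ ρ * τ ^ k) ∧ ⟪y, a y⟫ ≠ 0 ∧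
      ∀ i, y ∈ V i → pencilResidual a b y ∈ (V i)ᗮ := by
  obtain ⟨C, q, hq, hincr⟩ := hx.exists_sq_norm_sub_le_geometric hab
  obtain ⟨y, hyC, ρ, hρ, τ, hτ, hrate⟩ := exists_dist_le_geometric_of_sq_dist_le
    (isCompact_unitSphereOfUnion V).isComplete hx.mem hq
    fun k => by rw [dist_comm, dist_eq_norm]; exact hincr k
  have hlim : Tendsto x atTop (𝓝 y) := by
    refine tendsto_iff_dist_tendsto_zero.2 (squeeze_zero (fun _ => dist_nonneg) hrate ?_)
    simpa using (tendsto_pow_atTop_nhds_zero_of_lt_one hτ.1.le hτ.2).const_mul ρ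
  have hy := (hx.inner_pos_of_tendsto hab hlim).ne'
  exact ⟨y, hyC, ρ, hρ, τ, hτ, fun k => dist_eq_norm (x k) y ▸ hrate k, hy,
    fun i hi => hx.pencilResidual_mem_orthogonal_of_tendsto hlim hy hi⟩

end IsPGSA

end PGSA

section CoordinateSubspaces

variable {κ : Type*}

/-- The coordinate subspace of the vectors supported in `S`. -/
def coordSubspace (S : Finset κ) : Submodule ℝ (EuclideanSpace ℝ κ) where
  carrier := {x | ∀ i ∉ S, x i = 0}
  zero_mem' := fun _ _ => rfl
  add_mem' := fun hx hy i hi => by simp [hx i hi, hy i hi]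
  smul_mem' := fun c x hx i hi => by simp [hx i hi]

variable {S : Finset κ} {x : EuclideanSpace ℝ κ}

theorem single_mem_coordSubspace [DecidableEq κ] {i : κ} (hi : i ∈ S) (c : ℝ) :
    EuclideanSpace.single i c ∈ coordSubspace S := fun j hj => by
  rw [PiLp.single_apply, if_neg (by rintro rfl; exact hj hi)]

variable [Fintype κ]

theorem sum_mul_eq_of_mem_coordSubspace (hx : x ∈ coordSubspace S) (f : κ → ℝ) :
    ∑ i, f i * x i = ∑ i ∈ S, f i * x i :=
  (Finset.sum_subset S.subset_univ fun i _ hi => by rw [hx i hi, mul_zero]).symm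

theorem apply_eq_zero_of_mem_orthogonal_coordSubspace {y : EuclideanSpace ℝ κ}
    (hy : y ∈ (coordSubspace S)ᗮ) {i : κ} (hi : i ∈ S) : y i = 0 := by
  classical
  have hinner := (Submodule.mem_orthogonal _ _).1 hy _ (single_mem_coordSubspace hi 1)
  rwa [EuclideanSpace.inner_single_left, map_one, one_mul] at hinner

variable [DecidableEq κ]

theorem inner_toEuclideanCLM_eq_dotProduct_submatrix (hx : x ∈ coordSubspace S)
    (M : Matrix κ κ ℝ) :
    ⟪x, Matrix.toEuclideanCLM (𝕜 := ℝ) M x⟫ =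
      (fun i : S => x i) ⬝ᵥ
        (M.submatrix (fun i : S => (i : κ)) (fun i : S => (i : κ))).mulVec fun i : S => x i := by
  have sum_restrict : ∀ f : κ → ℝ, ∑ i, f i * x i = ∑ i : S, f i * x i := fun f =>
    (sum_mul_eq_of_mem_coordSubspace hx f).trans (S.sum_coe_sort fun i => f i * x i).symm
  rw [Matrix.inner_toEuclideanCLM, dotProduct_comm, dotProduct_comm (fun i : S => x i)]
  simp only [dotProduct, Matrix.mulVec, Matrix.submatrix_apply, sum_restrict]

theorem inner_toEuclideanCLM_pos_of_posDef_submatrix (hx : x ∈ coordSubspace S) (hx0 : x ≠ 0)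
    {M : Matrix κ κ ℝ}
    (hM : (M.submatrix (fun i : S => (i : κ)) (fun i : S => (i : κ))).PosDef) :
    0 < ⟪x, Matrix.toEuclideanCLM (𝕜 := ℝ) M x⟫ := by
  have restrict_ne_zero : (fun i : S => x i) ≠ 0 := fun hzero => hx0 <| by
    ext i
    by_cases hi : i ∈ S
    · exact congrFun hzero ⟨i, hi⟩
    · exact hx i hi
  rw [inner_toEuclideanCLM_eq_dotProduct_submatrix hx]
  exact hM.dotProduct_mulVec_pos restrict_ne_zero

end CoordinateSubspaces

section SparseEigenvalueProblem

variable {n r : ℕ} {A B : Matrix (Fin n) (Fin n) ℝ} {x : EuclideanSpace ℝ (Fin n)}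

/-- The coordinate subspaces of dimension `r`, whose union consists of the `r`-sparse vectors. -/
def sparseSubspaces (n r : ℕ) (S : {S : Finset (Fin n) // S.card = r}) :
    Submodule ℝ (EuclideanSpace ℝ (Fin n)) :=
  coordSubspace S.1

theorem mem_coordSubspace_iff_suppF_subset {S : Finset (Fin n)} :
    x ∈ coordSubspace S ↔ suppF x ⊆ S := by
  simp only [Finset.subset_iff, suppF, Finset.mem_filter, Finset.mem_univ, true_and]
  exact forall_congr' fun i => not_imp_comm

theorem exists_subset_card_eq_of_card_le (hrn : r ≤ n) {s : Finset (Fin n)} (hs : s.card ≤ r) :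
    ∃ S : {S : Finset (Fin n) // S.card = r}, s ⊆ S := by
  obtain ⟨S, hsS, -, hS⟩ := Finset.exists_subsuperset_card_eq s.subset_univ hs (by simpa using hrn)
  exact ⟨⟨S, hS⟩, hsS⟩

theorem sphC_eq_unitSphereOfUnion (hrn : r ≤ n) :
    sphC n r = unitSphereOfUnion (sparseSubspaces n r) := by
  ext x
  rw [sphC, unitSphereOfUnion, Set.mem_ofPred_eq, Set.mem_ofPred_eq, and_comm]
  refine and_congr_right fun _ => ⟨fun hcard => ?_, fun ⟨S, hS⟩ => ?_⟩
  · obtain ⟨S, hS⟩ := exists_subset_card_eq_of_card_le hrn hcard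
    exact ⟨S, mem_coordSubspace_iff_suppF_subset.2 hS⟩
  · exact (Finset.card_le_card (mem_coordSubspace_iff_suppF_subset.1 hS)).trans_eq S.2

theorem mvec_eq_toEuclideanCLM (M : Matrix (Fin n) (Fin n) ℝ) (x : EuclideanSpace ℝ (Fin n)) :
    mvec M x = Matrix.toEuclideanCLM (𝕜 := ℝ) M x :=
  rfl

theorem qf_eq_inner (M : Matrix (Fin n) (Fin n) ℝ) (x : EuclideanSpace ℝ (Fin n)) :
    qf M x = ⟪x, Matrix.toEuclideanCLM (𝕜 := ℝ) M x⟫ := by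
  rw [Matrix.inner_toEuclideanCLM]
  simp only [qf, dotProduct, Matrix.mulVec, Finset.mul_sum, mul_assoc]

-- Where `qf A x = 0` both sides are the junk value `0`.
theorem toReal_Gfun_eq_pencilQuotient (hx : x ∈ sphC n r) :
    (Gfun r A B x).toReal =
      pencilQuotient (Matrix.toEuclideanCLM (𝕜 := ℝ) A) (Matrix.toEuclideanCLM (𝕜 := ℝ) B) x := by
  rw [pencilQuotient, ← qf_eq_inner, ← qf_eq_inner, Gfun]
  split_ifs with h
  · rfl
  · rw [not_not.1 (not_and.1 h hx), div_zero, EReal.toReal_top]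

theorem sub_add_smul_mvec_eq_sub_smul_pencilResidual (hx : x ∈ sphC n r) (α : ℝ) :
    x - α • mvec B x + (α * (Gfun r A B x).toReal) • mvec A x =
      x - α • pencilResidual (Matrix.toEuclideanCLM (𝕜 := ℝ) A)
        (Matrix.toEuclideanCLM (𝕜 := ℝ) B) x := by
  rw [toReal_Gfun_eq_pencilQuotient hx, mvec_eq_toEuclideanCLM, mvec_eq_toEuclideanCLM,
    pencilResidual]
  module

theorem isAdmissiblePencil_toEuclideanCLM (hA : A.PosSemidef) (hB : B.IsHermitian)
    (hBr : ∀ Λ : Finset (Fin n), Λ.card = r →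
      (B.submatrix (fun i : Λ => (i : Fin n)) (fun i : Λ => (i : Fin n))).PosDef) :
    IsAdmissiblePencil (sparseSubspaces n r) (Matrix.toEuclideanCLM (𝕜 := ℝ) A)
      (Matrix.toEuclideanCLM (𝕜 := ℝ) B) where
  isPositive := Matrix.isPositive_toEuclideanLin_iff.2 hA
  isSymmetric := Matrix.isSymmetric_toEuclideanLin_iff.2 hB
  inner_pos := fun _ ⟨hz, S, hzS⟩ =>
    inner_toEuclideanCLM_pos_of_posDef_submatrix hzS (norm_ne_zero_iff.1 (by simp [hz]))
      (hBr S S.2)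

theorem isPGSA_toEuclideanCLM (hrn : r ≤ n) {x : ℕ → EuclideanSpace ℝ (Fin n)} {α : ℕ → ℝ}
    {αlo αhi : ℝ} (hαlo : 0 < αlo) (hαhi : αhi < 1 / ‖Matrix.toEuclideanCLM (𝕜 := ℝ) B‖)
    (hα : ∀ k, αlo ≤ α k ∧ α k ≤ αhi) (hx0 : x 0 ∈ sphC n r ∧ qf A (x 0) ≠ 0)
    (hiter : ∀ k, x (k + 1) ∈ sphC n r ∧ ∀ w ∈ sphC n r,
      ‖x (k + 1) - (x k - α k • mvec B (x k) +
          (α k * (Gfun r A B (x k)).toReal) • mvec A (x k))‖ ≤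
        ‖w - (x k - α k • mvec B (x k) +
          (α k * (Gfun r A B (x k)).toReal) • mvec A (x k))‖) :
    IsPGSA (sparseSubspaces n r) (Matrix.toEuclideanCLM (𝕜 := ℝ) A)
      (Matrix.toEuclideanCLM (𝕜 := ℝ) B) αlo αhi α x := by
  have hmem : ∀ k, x k ∈ sphC n r
    | 0 => hx0.1
    | k + 1 => (hiter k).1
  have hαhi_pos : 0 < αhi := hαlo.trans_le ((hα 0).1.trans (hα 0).2)
  exact {
    lo_pos := hαlo
    hi_mul_lt_one := (lt_div_iff₀ (one_div_pos.1 (hαhi_pos.trans hαhi))).1 hαhi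
    step_mem := hα
    inner_zero_ne := qf_eq_inner A (x 0) ▸ hx0.2
    mem := fun k => sphC_eq_unitSphereOfUnion hrn ▸ hmem k
    isMinOn := fun k z hz => by
      have hstep := (hiter k).2 z (sphC_eq_unitSphereOfUnion hrn ▸ hz)
      rwa [sub_add_smul_mvec_eq_sub_smul_pencilResidual (hmem k)] at hstep }

theorem mvec_apply_eq_of_pencilResidual_mem_orthogonal (hx : x ∈ sphC n r) {S : Finset (Fin n)}
    (hres : pencilResidual (Matrix.toEuclideanCLM (𝕜 := ℝ) A)
      (Matrix.toEuclideanCLM (𝕜 := ℝ) B) x ∈ (coordSubspace S)ᗮ) {i : Fin n} (hi : i ∈ S) :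
    mvec B x i = (Gfun r A B x).toReal * mvec A x i := by
  rw [toReal_Gfun_eq_pencilQuotient hx, ← sub_eq_zero]
  exact apply_eq_zero_of_mem_orthogonal_coordSubspace hres hi

theorem sum_suppF_eq_mvec_apply (M : Matrix (Fin n) (Fin n) ℝ) (x : EuclideanSpace ℝ (Fin n))
    (i : Fin n) : ∑ j ∈ suppF x, M i j * x j = mvec M x i :=
  (sum_mul_eq_of_mem_coordSubspace (mem_coordSubspace_iff_suppF_subset.2 subset_rfl) (M i)).symm

-- If `x` has fewer than `r` nonzero entries, every index lies in some `S ⊇ supp x` of size `r`.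
theorem critical_of_forall_pencilResidual_mem_orthogonal (hrn : r ≤ n) (hx : x ∈ sphC n r)
    (hres : ∀ S, x ∈ sparseSubspaces n r S → pencilResidual (Matrix.toEuclideanCLM (𝕜 := ℝ) A)
      (Matrix.toEuclideanCLM (𝕜 := ℝ) B) x ∈ (sparseSubspaces n r S)ᗮ) :
    ((suppF x).card < r ∧ mvec B x = (Gfun r A B x).toReal • mvec A x) ∨
      ((suppF x).card = r ∧ ∀ i ∈ suppF x,
        (∑ j ∈ suppF x, B i j * x j) =
          (Gfun r A B x).toReal * ∑ j ∈ suppF x, A i j * x j) := by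
  have apply_eq : ∀ S : {S : Finset (Fin n) // S.card = r}, suppF x ⊆ S → ∀ i ∈ S.1,
      mvec B x i = (Gfun r A B x).toReal * mvec A x i := fun S hS _ hi =>
    mvec_apply_eq_of_pencilResidual_mem_orthogonal hx
      (hres S (mem_coordSubspace_iff_suppF_subset.2 hS)) hi
  refine hx.1.lt_or_eq.imp (fun hlt => ⟨hlt, ?_⟩) fun heq => ⟨heq, fun i hi => ?_⟩
  · ext i
    obtain ⟨S, hS⟩ := exists_subset_card_eq_of_card_le hrn
      ((Finset.card_insert_le i (suppF x)).trans hlt)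
    exact apply_eq S ((Finset.subset_insert i _).trans hS) i (hS (Finset.mem_insert_self i _))
  · rw [sum_suppF_eq_mvec_apply, sum_suppF_eq_mvec_apply]
    exact apply_eq ⟨suppF x, heq⟩ subset_rfl i hi

end SparseEigenvalueProblem

theorem pgsa_sgep_Rlinear_convergence_to_critical_point_general
    {n : ℕ} (r : ℕ) (hrn : r ≤ n)
    (A B : Matrix (Fin n) (Fin n) ℝ)
    (hA : A.PosSemidef) (hB : B.IsHermitian)
    (hBr : ∀ Λ : Finset (Fin n), Λ.card = r →
      (B.submatrix (fun i : Λ => (i : Fin n)) (fun i : Λ => (i : Fin n))).PosDef)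
    (L : ℝ) (hL : L = ‖Matrix.toEuclideanCLM (𝕜 := ℝ) B‖)
    (x : ℕ → EuclideanSpace ℝ (Fin n)) (α : ℕ → ℝ) (αlo αhi : ℝ)
    (hαlo : 0 < αlo) (hαhi : αhi < 1 / L) (hα : ∀ k, αlo ≤ α k ∧ α k ≤ αhi)
    (hx0 : x 0 ∈ sphC n r ∧ qf A (x 0) ≠ 0)
    (hiter : ∀ k, x (k + 1) ∈ sphC n r ∧ ∀ w ∈ sphC n r,
      ‖x (k + 1) - (x k - α k • mvec B (x k) +
          (α k * (Gfun r A B (x k)).toReal) • mvec A (x k))‖ ≤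
        ‖w - (x k - α k • mvec B (x k) +
          (α k * (Gfun r A B (x k)).toReal) • mvec A (x k))‖) :
    ∃ xs : EuclideanSpace ℝ (Fin n), ∃ ρ > (0 : ℝ), ∃ τ ∈ Set.Ioo (0 : ℝ) 1,
      (∀ k, ‖x k - xs‖ ≤ ρ * τ ^ k) ∧
      (xs ∈ sphC n r ∧ qf A xs ≠ 0) ∧
      (((suppF xs).card < r ∧
          mvec B xs = ((Gfun r A B xs).toReal) • mvec A xs) ∨
        ((suppF xs).card = r ∧ ∀ i ∈ suppF xs,
          (∑ j ∈ suppF xs, B i j * xs j) =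
            (Gfun r A B xs).toReal * ∑ j ∈ suppF xs, A i j * xs j)) := by
  subst hL
  have hpgsa := isPGSA_toEuclideanCLM hrn hαlo hαhi hα hx0 hiter
  obtain ⟨y, hy, ρ, hρ, τ, hτ, hrate, hAy, hres⟩ :=
    hpgsa.exists_geometric_convergence (isAdmissiblePencil_toEuclideanCLM hA hB hBr)
  rw [← sphC_eq_unitSphereOfUnion hrn] at hy
  rw [← qf_eq_inner] at hAy
  exact ⟨y, ρ, hρ, τ, hτ, hrate, ⟨hy, hAy⟩,
    critical_of_forall_pencilResidual_mem_orthogonal hrn hy hres⟩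

/-- Theorems 6.7/6.8: PGSA applied to the sparse generalized eigenvalue problem
converges R-linearly to a critical point of G. -/
theorem pgsa_sgep_Rlinear_convergence_to_critical_point
    {n : ℕ} (r : ℕ) (hr1 : 1 ≤ r) (hrn : r ≤ n)
    (A B : Matrix (Fin n) (Fin n) ℝ)
    (hA : A.PosSemidef) (hB : B.PosSemidef)
    (hBr : ∀ Λ : Finset (Fin n), Λ.card = r →
      (B.submatrix (fun i : Λ => (i : Fin n)) (fun i : Λ => (i : Fin n))).PosDef)
    (L : ℝ) (hL : L = ‖Matrix.toEuclideanCLM (𝕜 := ℝ) B‖)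
    (x : ℕ → EuclideanSpace ℝ (Fin n)) (α : ℕ → ℝ) (αlo αhi : ℝ)
    (hαlo : 0 < αlo) (hαhi : αhi < 1 / L) (hα : ∀ k, αlo ≤ α k ∧ α k ≤ αhi)
    (hx0 : x 0 ∈ sphC n r ∧ qf A (x 0) ≠ 0)
    (hiter : ∀ k, x (k + 1) ∈ sphC n r ∧ ∀ w ∈ sphC n r,
      ‖x (k + 1) - (x k - α k • mvec B (x k) +
          (α k * (Gfun r A B (x k)).toReal) • mvec A (x k))‖ ≤
        ‖w - (x k - α k • mvec B (x k) +
          (α k * (Gfun r A B (x k)).toReal) • mvec A (x k))‖) :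
    ∃ xs : EuclideanSpace ℝ (Fin n), ∃ ρ > (0 : ℝ), ∃ τ ∈ Set.Ioo (0 : ℝ) 1,
      (∀ k, ‖x k - xs‖ ≤ ρ * τ ^ k) ∧
      (xs ∈ sphC n r ∧ qf A xs ≠ 0) ∧
      (((suppF xs).card < r ∧
          mvec B xs = ((Gfun r A B xs).toReal) • mvec A xs) ∨
        ((suppF xs).card = r ∧ ∀ i ∈ suppF xs,
          (∑ j ∈ suppF xs, B i j * xs j) =
            (Gfun r A B xs).toReal * ∑ j ∈ suppF xs, A i j * xs j)) :=
  pgsa_sgep_Rlinear_convergence_to_critical_point_general r hrn A B hA hB.isHermitian hBr L hL x α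
    αlo αhi hαlo hαhi hα hx0 hiter
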